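/- Let λ > 0, let F : ℝ³ → ℝ and G : ℝ³ → ℝ³ be C^∞ and 1-periodic in the second and third variables, and suppose G₁(x,y,z) = 0 whenever x ∈ {0,1}. Then there exist H : ℝ³ → ℝ and M : ℝ³ → ℝ³, C^∞ and 1-periodic in the second and third variables, such that ∂₁H(x,y,z) = 0 and M₁(x,y,z) = 0 whenever x ∈ {0,1}, and such that λ H − ∂_i M_i = F and λ M_i − ∂_i H = G_i for every i, at all points of [0,1]×ℝ². -/

import Mathlib

/-- Partial derivative in the `i`-th coordinate direction (coordinates `x,y,z ↔ 0,1,2`). -/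
noncomputable def pd (i : Fin 3) (f : (Fin 3 → ℝ) → ℝ) : (Fin 3 → ℝ) → ℝ :=
  fun p => fderiv ℝ f p (Pi.single i 1)

/-- 1-periodicity in the second and third variables. -/
def PerYZ (f : (Fin 3 → ℝ) → ℝ) : Prop :=
  ∀ p : Fin 3 → ℝ, f (p + Pi.single 1 1) = f p ∧ f (p + Pi.single 2 1) = f p

/-!
Eliminating `M = λ⁻¹ (G + ∇H)` leaves the Neumann problem `κ H - Δ H = R` on the slab, with
`κ = λ²` and `R = λ F + div G`; the condition `G₁ = 0` on the faces makes `∂₁H = 0` and `M₁ = 0`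
equivalent there. When `R` is a single plane wave, the Neumann problem is solved in closed form by
separating the normal coordinate, and all derivatives of the solution grow at most polynomially in
the wave vector. A general `R` is a superposition of plane waves on the slab: its normal
coordinate can be replaced by a smooth `2π`-periodic function that is the identity on `[0, 1]`,
which makes `R` periodic in all variables with rapidly decreasing Fourier coefficients. The same
superposition of the explicit solutions therefore converges with all its derivatives.
-/

open Asymptotics Filter MeasureTheory
open Complex (I)
open scoped Complex Real Topology

/-! ### Families with polynomially bounded derivatives -/

section PolyBounded

variable {X Y V W : Type*} [SeminormedAddCommGroup V] [SeminormedAddCommGroup W] {w : X → ℝ}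

/-- `f` is bounded by a constant times a power of the weight `w`, uniformly on the whole type. -/
def PolyBounded (w : X → ℝ) (f : X → V) : Prop :=
  ∃ N : ℕ, f =O[⊤] fun x => w x ^ N

theorem isBigO_top_pow_of_le (hw : ∀ x, 1 ≤ w x) {m n : ℕ} (hmn : m ≤ n) :
    (fun x => w x ^ m) =O[⊤] fun x => w x ^ n :=
  IsBigO.of_norm_le fun x => by
    rw [Real.norm_of_nonneg (pow_nonneg (zero_le_one.trans (hw x)) m)]
    exact pow_le_pow_right₀ (hw x) hmn

namespace PolyBounded

theorem of_bound {f : X → V} (C : ℝ) (hf : ∀ x, ‖f x‖ ≤ C) : PolyBounded w f :=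
  ⟨0, isBigO_top.2 ⟨C, fun x => by simpa using hf x⟩⟩

theorem self (w : X → ℝ) : PolyBounded w w :=
  ⟨1, by simpa using isBigO_refl w ⊤⟩

theorem mono {f : X → V} {g : X → W} (hg : PolyBounded w g) (h : ∀ x, ‖f x‖ ≤ ‖g x‖) :
    PolyBounded w f :=
  hg.imp fun _ hN => (IsBigO.of_norm_le h).trans hN.norm_left

theorem comp {f : X → V} (hf : PolyBounded w f) (φ : Y → X) :
    PolyBounded (fun y => w (φ y)) fun y => f (φ y) :=
  hf.imp fun _ hN => hN.comp_tendsto tendsto_top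

theorem norm {f : X → V} (hf : PolyBounded w f) : PolyBounded w fun x => ‖f x‖ :=
  hf.imp fun _ hN => hN.norm_left

theorem add (hw : ∀ x, 1 ≤ w x) {f g : X → V} (hf : PolyBounded w f) (hg : PolyBounded w g) :
    PolyBounded w fun x => f x + g x := by
  obtain ⟨m, hm⟩ := hf
  obtain ⟨n, hn⟩ := hg
  exact ⟨max m n, (hm.trans (isBigO_top_pow_of_le hw (le_max_left m n))).add
    (hn.trans (isBigO_top_pow_of_le hw (le_max_right m n)))⟩

theorem sum (hw : ∀ x, 1 ≤ w x) {κ : Type*} (s : Finset κ) {f : κ → X → V}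
    (hf : ∀ i ∈ s, PolyBounded w (f i)) : PolyBounded w fun x => ∑ i ∈ s, f i x := by
  classical
  induction s using Finset.induction_on with
  | empty => simpa using of_bound (0 : ℝ) (f := fun _ : X => (0 : V)) (by simp)
  | insert i s hi ih =>
    simp only [Finset.sum_insert hi]
    exact add hw (hf i (Finset.mem_insert_self i s))
      (ih fun j hj => hf j (Finset.mem_insert_of_mem hj))

theorem mul {A : Type*} [SeminormedRing A] {f g : X → A} (hf : PolyBounded w f)
    (hg : PolyBounded w g) : PolyBounded w fun x => f x * g x := by
  obtain ⟨m, hm⟩ := hf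
  obtain ⟨n, hn⟩ := hg
  exact ⟨m + n, by simpa only [pow_add] using hm.mul hn⟩

theorem smul_const {E : Type*} [SeminormedAddCommGroup E] [NormedSpace ℝ E] {f : X → ℝ}
    (hf : PolyBounded w f) (v : E) : PolyBounded w fun x => f x • v :=
  (hf.mul (.of_bound ‖‖v‖‖ fun _ => le_rfl)).mono fun x => by simp [norm_smul]

theorem pow {f : X → ℝ} (hf : PolyBounded w f) (n : ℕ) : PolyBounded w fun x => f x ^ n := by
  obtain ⟨m, hm⟩ := hf
  exact ⟨m * n, by simpa only [pow_mul] using hm.pow n⟩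

end PolyBounded

end PolyBounded

section Moderate

variable {ι E F V : Type*} [NormedAddCommGroup E] [NormedSpace ℝ E] [NormedAddCommGroup F]
  [NormedSpace ℝ F] [NormedAddCommGroup V] [NormedSpace ℝ V] {w : ι → ℝ}

/-- A family of smooth functions all of whose derivatives are bounded, with bounds growing at most
polynomially in the weight `w` of the index. -/
structure Moderate (w : ι → ℝ) (b : ι → E → V) : Prop where
  contDiff (k : ι) : ContDiff ℝ (⊤ : ℕ∞) (b k)
  polyBounded (m : ℕ) :
    PolyBounded (fun x : ι × E => w x.1) fun x => iteratedFDeriv ℝ m (b x.1) x.2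

namespace Moderate

theorem const {a : ι → V} (ha : PolyBounded w a) : Moderate w fun k (_ : E) => a k where
  contDiff _ := contDiff_const
  polyBounded m := (ha.comp Prod.fst).mono fun x => by
    rcases eq_or_ne m 0 with rfl | hm
    · simp
    · simp [iteratedFDeriv_const_of_ne hm]

theorem add (hw : ∀ k, 1 ≤ w k) {b b' : ι → E → V} (hb : Moderate w b) (hb' : Moderate w b') :
    Moderate w fun k p => b k p + b' k p where
  contDiff k := (hb.contDiff k).add (hb'.contDiff k)
  polyBounded m := ((hb.polyBounded m).add (fun x => hw x.1) (hb'.polyBounded m)).mono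
    fun x : ι × E => by
    have h := iteratedFDeriv_add_apply (x := x.2)
      ((hb.contDiff x.1).contDiffAt.of_le (mod_cast le_top : (m : WithTop ℕ∞) ≤ _))
      ((hb'.contDiff x.1).contDiffAt.of_le (mod_cast le_top))
    exact (congrArg (‖·‖) h).le

theorem mul {A : Type*} [NormedRing A] [NormedAlgebra ℝ A] (hw : ∀ k, 1 ≤ w k) {b b' : ι → E → A}
    (hb : Moderate w b) (hb' : Moderate w b') : Moderate w fun k p => b k p * b' k p where
  contDiff k := (hb.contDiff k).mul (hb'.contDiff k)
  polyBounded m := by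
    have leibniz : PolyBounded (fun x : ι × E => w x.1) fun x : ι × E => ∑ i ∈ Finset.range (m + 1),
        (m.choose i : ℝ) * ‖iteratedFDeriv ℝ i (b x.1) x.2‖ *
          ‖iteratedFDeriv ℝ (m - i) (b' x.1) x.2‖ :=
      .sum (fun x : ι × E => hw x.1) _ fun i _ =>
        ((PolyBounded.of_bound _ fun _ => le_rfl).mul (hb.polyBounded i).norm).mul
          (hb'.polyBounded (m - i)).norm
    exact leibniz.mono fun x : ι × E => (norm_iteratedFDeriv_mul_le (hb.contDiff x.1)
      (hb'.contDiff x.1) x.2 (mod_cast le_top)).trans (le_abs_self _)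

theorem const_mul {A : Type*} [NormedRing A] [NormedAlgebra ℝ A] (hw : ∀ k, 1 ≤ w k) {a : ι → A}
    (ha : PolyBounded w a) {b : ι → E → A} (hb : Moderate w b) :
    Moderate w fun k p => a k * b k p :=
  (const ha).mul hw hb

theorem comp_affine {b : ι → F → V} (hb : Moderate w b) {L : ι → E →L[ℝ] F}
    (hL : PolyBounded w L) (a : ι → F) : Moderate w fun k p => b k (L k p + a k) where
  contDiff k := (hb.contDiff k).comp ((L k).contDiff.add contDiff_const)
  polyBounded m := by
    have bound : PolyBounded (fun x : ι × E => w x.1) fun x : ι × E =>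
        ‖iteratedFDeriv ℝ m (b x.1) (L x.1 x.2 + a x.1)‖ * ‖L x.1‖ ^ m :=
      ((hb.polyBounded m).comp fun x : ι × E => (x.1, L x.1 x.2 + a x.1)).norm.mul
        ((hL.comp Prod.fst).norm.pow m)
    refine bound.mono fun ⟨k, p⟩ => ?_
    have translate : ContDiff ℝ (⊤ : ℕ∞) fun q => b k (q + a k) :=
      (hb.contDiff k).comp (contDiff_id.add contDiff_const)
    have chain := (L k).iteratedFDeriv_comp_right translate p
      (mod_cast le_top : (m : WithTop ℕ∞) ≤ _)
    rw [iteratedFDeriv_comp_add_right] at chain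
    refine (congrArg (‖·‖) chain).le.trans
      ((ContinuousMultilinearMap.norm_compContinuousLinearMap_le _ _).trans ?_)
    simp only [Finset.prod_const, Finset.card_univ, Fintype.card_fin]
    exact le_abs_self _

theorem comp_mul_add {b : ι → ℝ → V} (hb : Moderate w b) {c : ι → ℝ} (hc : PolyBounded w c)
    (a : ι → ℝ) : Moderate w fun k x => b k (c k * x + a k) :=
  hb.comp_affine (L := fun k => c k • ContinuousLinearMap.id ℝ ℝ) (hc.smul_const _) a

theorem fderiv_apply {b : ι → E → V} (hb : Moderate w b) (v : E) :
    Moderate w fun k p => fderiv ℝ (b k) p v where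
  contDiff k := ((hb.contDiff k).fderiv_right (by simp)).clm_apply contDiff_const
  polyBounded m := by
    refine ((PolyBounded.of_bound ‖v‖ fun _ => (norm_norm v).le).mul
      (hb.polyBounded (m + 1)).norm).mono fun x => ?_
    have hderiv : ContDiff ℝ (⊤ : ℕ∞) (fderiv ℝ (b x.1)) := (hb.contDiff x.1).fderiv_right (by simp)
    exact (norm_iteratedFDeriv_clm_apply_const hderiv.contDiffAt (mod_cast le_top)).trans
      (by rw [norm_iteratedFDeriv_fderiv]; exact le_abs_self _)

theorem congr {b b' : ι → E → V} (hb : Moderate w b) (h : ∀ k p, b' k p = b k p) :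
    Moderate w b' := by
  rwa [show b' = b from funext₂ h]

end Moderate

/-- Coefficients decaying faster than every negative power of the weight `w`. -/
def RapidDecay (w : ι → ℝ) (c : ι → V) : Prop :=
  ∀ N : ℕ, ∃ C, ∀ k, w k ^ N * ‖c k‖ ≤ C

theorem RapidDecay.exists_summable_bound (hw : ∀ k, 1 ≤ w k)
    {s : ℕ} (hs : Summable fun k => (w k ^ s)⁻¹) {c : ι → ℂ} (hc : RapidDecay w c)
    {b : ι → E → ℂ} (hb : Moderate w b) (m : ℕ) :
    ∃ u : ι → ℝ, Summable u ∧ ∀ k p, ‖iteratedFDeriv ℝ m (fun q => c k * b k q) p‖ ≤ u k := by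
  obtain ⟨N, hN⟩ := hb.polyBounded m
  obtain ⟨B, hB⟩ := isBigO_top.1 hN
  obtain ⟨C, hC⟩ := hc (N + s)
  refine ⟨fun k => |B| * C * (w k ^ s)⁻¹, hs.mul_left _, fun k p => ?_⟩
  have hpos : 0 < w k := zero_lt_one.trans_le (hw k)
  have hderiv : iteratedFDeriv ℝ m (fun q => c k * b k q) p = c k • iteratedFDeriv ℝ m (b k) p :=
    iteratedFDeriv_const_smul_apply (f := b k) (a := c k)
      ((hb.contDiff k).contDiffAt.of_le (mod_cast le_top))
  have hbk : ‖iteratedFDeriv ℝ m (b k) p‖ ≤ |B| * w k ^ N := by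
    simpa [abs_of_pos hpos] using (hB (k, p)).trans
      (mul_le_mul_of_nonneg_right (le_abs_self B) (norm_nonneg _))
  calc ‖iteratedFDeriv ℝ m (fun q => c k * b k q) p‖
      ≤ ‖c k‖ * (|B| * w k ^ N) := by
        rw [hderiv, norm_smul]; gcongr
    _ = |B| * (w k ^ (N + s) * ‖c k‖) * (w k ^ s)⁻¹ := by
        rw [pow_add]; field_simp
    _ ≤ |B| * C * (w k ^ s)⁻¹ := by gcongr; exact hC k

/-- The superposition of the family `b` with coefficients `c`; as for every `∑'`, it is the function
`0` wherever the series diverges. -/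
noncomputable def superposition (c : ι → ℂ) (b : ι → E → ℂ) (p : E) : ℂ :=
  ∑' k, c k * b k p

section Superposition

variable (hw : ∀ k, 1 ≤ w k) {s : ℕ} (hs : Summable fun k => (w k ^ s)⁻¹) {c : ι → ℂ}
  (hc : RapidDecay w c) {b : ι → E → ℂ} (hb : Moderate w b)
include hw hs hc hb

theorem hasSum_superposition (p : E) : HasSum (fun k => c k * b k p) (superposition c b p) := by
  obtain ⟨u, hu, hbu⟩ := hc.exists_summable_bound hw hs hb 0
  exact (Summable.of_norm_bounded hu fun k => by simpa using hbu k p).hasSum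

theorem contDiff_superposition : ContDiff ℝ (⊤ : ℕ∞) (superposition c b) := by
  choose u hu hbu using hc.exists_summable_bound hw hs hb
  exact contDiff_tsum (fun k => contDiff_const.mul (hb.contDiff k)) (fun m _ => hu m)
    fun m k p _ => hbu m k p

theorem fderiv_superposition_apply (p v : E) :
    fderiv ℝ (superposition c b) p v = superposition c (fun k q => fderiv ℝ (b k) q v) p := by
  obtain ⟨u, hu, hbu⟩ := hc.exists_summable_bound hw hs hb 1
  have hdiff : ∀ k, Differentiable ℝ (b k) := fun k => (hb.contDiff k).differentiable (by simp)
  have hbound : ∀ k q, ‖fderiv ℝ (fun q => c k * b k q) q‖ ≤ u k := fun k q => by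
    simpa [← norm_iteratedFDeriv_one] using hbu k q
  have hsum := (hasSum_superposition hw hs hc hb p).summable
  have hderiv : fderiv ℝ (superposition c b) p = ∑' k, fderiv ℝ (fun q => c k * b k q) p :=
    fderiv_tsum_apply hu (fun k => (hdiff k).const_mul _) hbound hsum p
  have hsum' : Summable fun k => fderiv ℝ (fun q => c k * b k q) p :=
    .of_norm_bounded hu fun k => hbound k p
  rw [hderiv]
  refine ((ContinuousLinearMap.apply ℝ ℂ v).map_tsum hsum').trans (tsum_congr fun k => ?_)
  simp [fderiv_const_mul (hdiff k p)]

end Superposition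

end Moderate

/-! ### Fourier series of smooth periodic functions -/

section PlaneWave

variable {d : Type*}

/-- The partial derivative of `f` in the `i`-th coordinate direction. -/
noncomputable def partialDeriv {V : Type*} [NormedAddCommGroup V] [NormedSpace ℝ V] [DecidableEq d]
    (i : d) (f : (d → ℝ) → V) (p : d → ℝ) : V :=
  fderiv ℝ f p (Pi.single i 1)

section PartialDeriv

variable [DecidableEq d] {V : Type*} [NormedAddCommGroup V] [NormedSpace ℝ V] {f : (d → ℝ) → V}

theorem periodic_partialDeriv [Finite d] {v : d → ℝ} (hf : Function.Periodic f v) (i : d) :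
    Function.Periodic (partialDeriv i f) v := fun p => by
  cases nonempty_fintype d
  unfold partialDeriv
  rw [← fderiv_comp_add_right, show (fun q => f (q + v)) = f from funext hf]

variable [Fintype d]

theorem continuous_partialDeriv (hf : ContDiff ℝ 1 f) (i : d) : Continuous (partialDeriv i f) :=
  (hf.continuous_fderiv one_ne_zero).clm_apply continuous_const

theorem contDiff_partialDeriv (hf : ContDiff ℝ (⊤ : ℕ∞) f) (i : d) :
    ContDiff ℝ (⊤ : ℕ∞) (partialDeriv i f) :=
  (hf.fderiv_right (by simp)).clm_apply contDiff_const

end PartialDeriv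

variable [Fintype d]

/-- The plane wave `p ↦ exp (i ω·p)` with wave vector `ω`. -/
noncomputable def planeWave (ω p : d → ℝ) : ℂ :=
  Complex.exp ((ω ⬝ᵥ p : ℝ) * I)

theorem norm_planeWave (ω p : d → ℝ) : ‖planeWave ω p‖ = 1 :=
  Complex.norm_exp_ofReal_mul_I _

theorem contDiff_planeWave (ω : d → ℝ) : ContDiff ℝ (⊤ : ℕ∞) (planeWave ω) := by
  have phase : ContDiff ℝ (⊤ : ℕ∞) fun p : d → ℝ => ω ⬝ᵥ p := by
    unfold dotProduct
    fun_prop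
  exact ((Complex.ofRealCLM.contDiff.comp phase).mul contDiff_const).cexp

theorem partialDeriv_planeWave [DecidableEq d] (j : d) (ω p : d → ℝ) :
    partialDeriv j (planeWave ω) p = I * ω j * planeWave ω p := by
  have phase : HasFDerivAt (fun q : d → ℝ => ω ⬝ᵥ q)
      (∑ i, ω i • ContinuousLinearMap.proj (R := ℝ) (φ := fun _ : d => ℝ) i) p :=
    HasFDerivAt.fun_sum fun i _ => ((hasFDerivAt_apply (𝕜 := ℝ) i p).const_mul (ω i))
  have wave := ((Complex.ofRealCLM.hasFDerivAt.comp p phase).mul_const I).cexp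
  refine (congrArg (· (Pi.single j 1)) wave.fderiv).trans ?_
  simp only [Function.comp_apply, Complex.ofRealCLM_apply, smul_apply, sum_apply, smul_eq_mul,
    ContinuousLinearMap.comp_apply, ContinuousLinearMap.proj_apply, Pi.single_apply, mul_ite,
    mul_one, mul_zero, Finset.sum_ite_eq', Finset.mem_univ, if_true, planeWave]
  ring

end PlaneWave

theorem summable_one_add_norm_pow_inv (d : Type*) [Fintype d] :
    Summable fun k : d → ℤ => ((1 + ‖k‖) ^ (Fintype.card d + 1))⁻¹ := by
  let L : Submodule ℤ (d → ℝ) := Submodule.span ℤ (Set.range (Pi.basisFun ℝ d))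
  have hmem : ∀ k : d → ℤ, (fun j => (k j : ℝ)) ∈ L := fun k =>
    ((Pi.basisFun ℝ d).mem_span_iff_repr_mem ℤ _).2 fun j => ⟨k j, by simp⟩
  have hrank : Module.finrank ℤ L = Fintype.card d := by
    rw [ZLattice.rank ℝ L, Module.finrank_fintype_fun_eq_card]
  have hlattice := (ZLattice.summable_norm_pow_inv L (Fintype.card d + 1)
    (by rw [hrank]; exact Nat.lt_succ_self _)).comp_injective (i := fun k => ⟨_, hmem k⟩)
      fun k l hkl => funext fun j => Int.cast_injective (congrFun (congrArg Subtype.val hkl) j)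
  refine .of_norm_bounded_eventually hlattice ?_
  filter_upwards [eventually_cofinite_ne 0] with k hk
  have hnorm : ‖fun j => (k j : ℝ)‖ = ‖k‖ := rfl
  have hpos : 0 < ‖k‖ := norm_pos_iff.2 hk
  rw [Real.norm_of_nonneg (by positivity), Function.comp_apply, Submodule.coe_norm, hnorm, inv_pow]
  exact inv_anti₀ (pow_pos hpos _) (pow_le_pow_left₀ hpos.le (by linarith) _)

section FourierCoeff

variable {d : Type*}

theorem periodic_of_periodic_single [Finite d] [DecidableEq d] {V : Type*} {f : (d → ℝ) → V}
    (hf : ∀ j, Function.Periodic f (Pi.single j 1)) (m : d → ℤ) :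
    Function.Periodic f fun j => (m j : ℝ) := by
  cases nonempty_fintype d
  have hm : (fun j => (m j : ℝ)) = ∑ j, m j • (Pi.single j 1 : d → ℝ) := by
    ext i
    simp [Finset.sum_apply, Pi.single_apply]
  rw [hm]
  refine Finset.sum_induction _ (Function.Periodic f) (fun _ _ => Function.Periodic.add_period)
    (fun p => by simp) fun j _ => (hf j).zsmul (m j)

theorem integral_partialDeriv_eq_zero_of_periodic {n : ℕ} {V : Type*} [NormedAddCommGroup V]
    [NormedSpace ℝ V] {f : (Fin (n + 1) → ℝ) → V} (hf : ContDiff ℝ 1 f) {j : Fin (n + 1)}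
    (hper : Function.Periodic f (Pi.single j 1)) :
    ∫ p in Set.Icc 0 1, partialDeriv j f p = 0 := by
  let field : Fin (n + 1) → (Fin (n + 1) → ℝ) → V := Pi.single j f
  have hfield : ∀ i, ContDiff ℝ 1 (field i) := fun i => by
    rcases eq_or_ne i j with rfl | hij
    · simpa only [field, Pi.single_eq_same] using hf
    · simpa only [field, Pi.single_eq_of_ne hij] using! contDiff_const (c := (0 : V))
  have hdiv : ∀ p, ∑ i, fderiv ℝ (field i) p (Pi.single i 1) = partialDeriv j f p := fun p => by
    rw [Finset.sum_eq_single j (fun i _ hij => by simp [field, Pi.single_eq_of_ne hij]) (by simp)]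
    simp only [field, Pi.single_eq_same, partialDeriv]
  have hint : IntegrableOn (partialDeriv j f) (Set.Icc 0 1) :=
    (continuous_partialDeriv hf j).continuousOn.integrableOn_Icc
  have gauss := integral_divergence_of_hasFDerivAt_off_countable' (0 : Fin (n + 1) → ℝ) 1
    (fun _ => zero_le_one) field (fun i => fderiv ℝ (field i)) ∅ Set.countable_empty
    (fun i => (hfield i).continuous.continuousOn)
    (fun p _ i => ((hfield i).differentiable one_ne_zero p).hasFDerivAt)
    (by simpa only [hdiv] using hint)
  simp only [hdiv] at gauss
  rw [gauss]
  refine Finset.sum_eq_zero fun i _ => sub_eq_zero.2 (integral_congr_ae (.of_forall fun q => ?_))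
  rcases eq_or_ne i j with rfl | hij
  · have hface : i.insertNth 1 q = i.insertNth 0 q + (Pi.single i 1 : Fin (n + 1) → ℝ) := by
      refine Fin.insertNth_eq_iff.2 ⟨by simp, funext fun l => ?_⟩
      simp [Fin.removeNth]
    simpa [field, hface] using hper _
  · simp [field, Pi.single_eq_of_ne hij]

/-- The Fourier coefficient of index `k` of a function on `ℝᵈ` that is 1-periodic in every
variable, computed on the unit cube. -/
noncomputable def cubeFourierCoeff [Fintype d] (f : (d → ℝ) → ℂ) (k : d → ℤ) : ℂ :=
  ∫ p in Set.Icc 0 1, planeWave (fun j => 2 * π * (-k) j) p * f p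

theorem planeWave_eq_mFourier [Fintype d] (k : d → ℤ) (p : d → ℝ) :
    planeWave (fun j => 2 * π * k j) p =
      UnitAddTorus.mFourier k fun j => (p j : UnitAddCircle) := by
  simp only [UnitAddTorus.mFourier, ContinuousMap.coe_mk, fourier_coe_apply, ← Complex.exp_sum,
    planeWave, dotProduct]
  push_cast
  rw [Finset.sum_mul]
  exact congrArg _ (Finset.sum_congr rfl fun j _ => by ring)

theorem planeWave_periodic [Fintype d] [DecidableEq d] (k : d → ℤ) (j : d) :
    Function.Periodic (planeWave fun j => 2 * π * k j) (Pi.single j 1) := fun p => by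
  rw [planeWave_eq_mFourier, planeWave_eq_mFourier]
  congr 1
  ext i
  rcases eq_or_ne i j with rfl | hij
  · simp
  · simp [Pi.single_eq_of_ne hij]

theorem cubeFourierCoeff_partialDeriv {n : ℕ} {f : (Fin (n + 1) → ℝ) → ℂ} (hf : ContDiff ℝ 1 f)
    {j : Fin (n + 1)} (hper : Function.Periodic f (Pi.single j 1)) (k : Fin (n + 1) → ℤ) :
    cubeFourierCoeff (partialDeriv j f) k =
      I * (2 * π * k j) * cubeFourierCoeff f k := by
  set e := planeWave fun j => 2 * π * (-k) j
  have hsmooth : ContDiff ℝ 1 e := (contDiff_planeWave _).of_le (mod_cast le_top)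
  have product_rule : ∀ p, partialDeriv j (fun q => e q * f q) p =
      e p * partialDeriv j f p - I * (2 * π * k j) * (e p * f p) := fun p => by
    have hwave : fderiv ℝ e p (Pi.single j 1) = I * (2 * π * (-k) j : ℝ) * e p :=
      partialDeriv_planeWave j _ p
    unfold partialDeriv
    rw [fderiv_fun_mul (hsmooth.differentiable one_ne_zero p) (hf.differentiable one_ne_zero p)]
    simp only [add_apply, smul_apply, smul_eq_mul, hwave]
    push_cast [Pi.neg_apply]
    ring
  have parts := integral_partialDeriv_eq_zero_of_periodic (hsmooth.mul hf)
    ((planeWave_periodic (-k) j).mul hper)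
  have hint : ∀ {g : (Fin (n + 1) → ℝ) → ℂ}, Continuous g →
      IntegrableOn (fun p => e p * g p) (Set.Icc 0 1) := fun hg =>
    (hsmooth.continuous.mul hg).continuousOn.integrableOn_Icc
  simp only [product_rule] at parts
  rw [integral_sub (hint (continuous_partialDeriv hf j)) ((hint hf.continuous).const_mul _),
    integral_const_mul, sub_eq_zero] at parts
  exact parts

theorem norm_mul_norm_cubeFourierCoeff_le {n : ℕ} {f : (Fin (n + 1) → ℝ) → ℂ}
    (hf : ContDiff ℝ 1 f) (hper : ∀ j, Function.Periodic f (Pi.single j 1))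
    (k : Fin (n + 1) → ℤ) :
    ‖k‖ * ‖cubeFourierCoeff f k‖ ≤ ∑ j, ‖cubeFourierCoeff (partialDeriv j f) k‖ := by
  have hnorm : ‖k‖ ≤ ∑ j, |(k j : ℝ)| := (pi_norm_le_iff_of_nonneg (by positivity)).2 fun j =>
    (Int.norm_eq_abs (k j)).le.trans (Finset.single_le_sum (f := fun j => |(k j : ℝ)|)
      (fun _ _ => abs_nonneg _) (Finset.mem_univ j))
  refine (mul_le_mul_of_nonneg_right hnorm (norm_nonneg _)).trans ?_
  rw [Finset.sum_mul]
  refine Finset.sum_le_sum fun j _ => ?_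
  rw [cubeFourierCoeff_partialDeriv hf (hper j) k]
  simp only [norm_mul, Complex.norm_I, one_mul, Complex.norm_ofNat, Complex.norm_real,
    Complex.norm_intCast, Real.norm_of_nonneg Real.pi_pos.le]
  gcongr
  exact le_mul_of_one_le_left (abs_nonneg _) (by linarith [Real.pi_gt_three])

theorem rapidDecay_cubeFourierCoeff {n : ℕ} {f : (Fin (n + 1) → ℝ) → ℂ}
    (hf : ContDiff ℝ (⊤ : ℕ∞) f) (hper : ∀ j, Function.Periodic f (Pi.single j 1)) :
    RapidDecay (fun k => 1 + ‖k‖) (cubeFourierCoeff f) := by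
  intro N
  induction N generalizing f with
  | zero =>
    refine ⟨∫ p in Set.Icc 0 1, ‖f p‖, fun k => ?_⟩
    simpa [cubeFourierCoeff, norm_planeWave] using norm_integral_le_integral_norm
      (μ := volume.restrict (Set.Icc 0 1)) fun p => planeWave (fun j => 2 * π * (-k) j) p * f p
  | succ N ih =>
    obtain ⟨C, hC⟩ := ih hf hper
    choose D hD using fun j => ih (contDiff_partialDeriv hf j) fun i =>
      periodic_partialDeriv (hper i) j
    refine ⟨C + ∑ j, D j, fun k => ?_⟩
    calc (1 + ‖k‖) ^ (N + 1) * ‖cubeFourierCoeff f k‖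
        = (1 + ‖k‖) ^ N * ‖cubeFourierCoeff f k‖
          + (1 + ‖k‖) ^ N * (‖k‖ * ‖cubeFourierCoeff f k‖) := by ring
      _ ≤ (1 + ‖k‖) ^ N * ‖cubeFourierCoeff f k‖
          + (1 + ‖k‖) ^ N * ∑ j, ‖cubeFourierCoeff (partialDeriv j f) k‖ := by
        gcongr
        exact norm_mul_norm_cubeFourierCoeff_le (hf.of_le (mod_cast le_top)) hper k
      _ ≤ C + ∑ j, D j := by
        rw [Finset.mul_sum]
        exact add_le_add (hC k) (Finset.sum_le_sum fun j _ => hD j k)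

theorem exists_continuousMap_unitAddTorus [Finite d] [DecidableEq d] {V : Type*}
    [TopologicalSpace V] {f : (d → ℝ) → V} (hf : Continuous f)
    (hper : ∀ j, Function.Periodic f (Pi.single j 1)) :
    ∃ g : C(UnitAddTorus d, V), ∀ p : d → ℝ, g (fun j => (p j : UnitAddCircle)) = f p := by
  let toTorus : C(d → ℝ, UnitAddTorus d) :=
    ⟨Pi.map fun _ : d => ((↑) : ℝ → UnitAddCircle), by fun_prop⟩
  have hquot : Topology.IsQuotientMap toTorus :=
    IsOpenQuotientMap.isQuotientMap (.piMap fun _ => QuotientAddGroup.isOpenQuotientMap_mk)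
  have hfactor : Function.FactorsThrough f toTorus := fun p q hpq => by
    have hdiff : ∀ j, ((p j - q j : ℝ) : UnitAddCircle) = 0 := fun j => by
      rw [AddCircle.coe_sub, sub_eq_zero]
      exact congrFun hpq j
    choose m hm using fun j => (AddCircle.coe_eq_zero_iff 1).1 (hdiff j)
    have hpm : p = q + fun j => (m j : ℝ) := by
      ext j
      have hmj : (m j : ℝ) = p j - q j := by simpa using hm j
      simp [hmj]
    rw [hpm, periodic_of_periodic_single hper m q]
  exact ⟨hquot.lift ⟨f, hf⟩ hfactor,
    fun p => DFunLike.congr_fun (hquot.lift_comp ⟨f, hf⟩ hfactor) p⟩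

theorem mFourierCoeff_eq_cubeFourierCoeff [Fintype d] {f : (d → ℝ) → ℂ} {g : UnitAddTorus d → ℂ}
    (hg : ∀ p : d → ℝ, g (fun j => (p j : UnitAddCircle)) = f p) (k : d → ℤ) :
    UnitAddTorus.mFourierCoeff g k = cubeFourierCoeff f k := by
  have hcube : {p : d → ℝ | ∀ j, p j ∈ Set.Ioc ((0 : d → ℝ) j) ((0 : d → ℝ) j + 1)} =
      Set.univ.pi fun j => Set.Ioc ((0 : d → ℝ) j) ((1 : d → ℝ) j) := by
    ext p; simp [Set.mem_pi]
  rw [UnitAddTorus.mFourierCoeff_eq_integral g k 0, hcube, volume_pi,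
    setIntegral_congr_set Measure.univ_pi_Ioc_ae_eq_Icc]
  simp only [cubeFourierCoeff, planeWave_eq_mFourier, hg, smul_eq_mul]
  rfl

theorem hasSum_cubeFourierCoeff [Fintype d] [DecidableEq d] {f : (d → ℝ) → ℂ} (hf : Continuous f)
    (hper : ∀ j, Function.Periodic f (Pi.single j 1)) (hsum : Summable (cubeFourierCoeff f))
    (p : d → ℝ) :
    HasSum (fun k => cubeFourierCoeff f k * planeWave (fun j => 2 * π * k j) p) (f p) := by
  obtain ⟨g, hg⟩ := exists_continuousMap_unitAddTorus hf hper
  have hcoeff : UnitAddTorus.mFourierCoeff g = cubeFourierCoeff f :=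
    funext (mFourierCoeff_eq_cubeFourierCoeff hg)
  have h := UnitAddTorus.hasSum_mFourier_series_apply_of_summable (f := g) (hcoeff ▸ hsum)
    fun j => (p j : UnitAddCircle)
  simpa only [hcoeff, hg, planeWave_eq_mFourier, smul_eq_mul] using h

end FourierCoeff

/-! ### The Neumann problem for a plane wave -/

section BoundedExponentials

variable {ι : Type*} {w : ι → ℝ}

theorem Moderate.of_bounded_iteratedDeriv {V : Type*} [NormedAddCommGroup V] [NormedSpace ℝ V]
    {f : ℝ → V} (hf : ContDiff ℝ (⊤ : ℕ∞) f) (hbdd : ∀ m, ∃ C, ∀ t, ‖iteratedDeriv m f t‖ ≤ C) :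
    Moderate w fun _ : ι => f where
  contDiff _ := hf
  polyBounded m := by
    obtain ⟨C, hC⟩ := hbdd m
    exact .of_bound C fun x => norm_iteratedFDeriv_eq_norm_iteratedDeriv.trans_le (hC x.2)

theorem hasDerivAt_cexp_mul_ofReal (a : ℂ) (t : ℝ) :
    HasDerivAt (fun s : ℝ => cexp (a * s)) (a * cexp (a * t)) t := by
  simpa [mul_comm] using ((hasDerivAt_id t).ofReal_comp.const_mul a).cexp

theorem contDiff_cexp_mul_ofReal (a : ℂ) : ContDiff ℝ (⊤ : ℕ∞) fun t : ℝ => cexp (a * t) :=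
  (contDiff_const.mul Complex.ofRealCLM.contDiff).cexp

theorem iteratedDeriv_cexp_mul_ofReal (a : ℂ) (m : ℕ) :
    iteratedDeriv m (fun t : ℝ => cexp (a * t)) = fun t : ℝ => a ^ m * cexp (a * t) := by
  induction m with
  | zero => simp
  | succ m ih =>
    rw [iteratedDeriv_succ, ih]
    ext t
    rw [((hasDerivAt_cexp_mul_ofReal a t).const_mul _).deriv]
    ring

theorem moderate_cexp_I_mul : Moderate w fun (_ : ι) (t : ℝ) => cexp (I * t) :=
  .of_bounded_iteratedDeriv (contDiff_cexp_mul_ofReal I) fun m => ⟨1, fun t => by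
    rw [iteratedDeriv_cexp_mul_ofReal]
    simp [mul_comm I, Complex.norm_exp_ofReal_mul_I]⟩

/-- A smooth function on `ℝ` that equals `exp (-t)` for `-1 ≤ t`, vanishes for `t ≤ -2`, and
therefore has bounded derivatives of all orders. -/
noncomputable def cutoffExp (t : ℝ) : ℂ :=
  cexp (-1 * t) * Real.smoothTransition (t + 2)

theorem contDiff_cutoffExp : ContDiff ℝ (⊤ : ℕ∞) cutoffExp :=
  (contDiff_cexp_mul_ofReal (-1)).mul (Complex.ofRealCLM.contDiff.comp
    (Real.smoothTransition.contDiff.comp (contDiff_id.add contDiff_const)))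

theorem cutoffExp_of_neg_one_le {t : ℝ} (ht : -1 ≤ t) : cutoffExp t = cexp (-t) := by
  rw [cutoffExp, Real.smoothTransition.one_of_one_le (by linarith), Complex.ofReal_one, mul_one,
    neg_one_mul]

theorem cutoffExp_of_le_neg_two {t : ℝ} (ht : t ≤ -2) : cutoffExp t = 0 := by
  rw [cutoffExp, Real.smoothTransition.zero_of_nonpos (by linarith), Complex.ofReal_zero, mul_zero]

theorem exists_norm_iteratedDeriv_cutoffExp_le (m : ℕ) :
    ∃ C, ∀ t, ‖iteratedDeriv m cutoffExp t‖ ≤ C := by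
  obtain ⟨C, hC⟩ := (isCompact_Icc (a := (-2 : ℝ)) (b := -1)).exists_bound_of_continuousOn
    (contDiff_cutoffExp.continuous_iteratedDeriv m (mod_cast le_top)).continuousOn
  refine ⟨max C (Real.exp 1), fun t => ?_⟩
  rcases lt_or_ge t (-2) with ht | ht
  · have hzero : cutoffExp =ᶠ[𝓝 t] fun _ => 0 :=
      (eventually_lt_nhds ht).mono fun s hs => cutoffExp_of_le_neg_two hs.le
    rw [hzero.iteratedDeriv_eq m, iteratedDeriv_const]
    simpa using Or.inr (Real.exp_pos 1).le
  rcases le_or_gt t (-1) with ht' | ht'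
  · exact (hC t ⟨ht, ht'⟩).trans (le_max_left _ _)
  · have hexp : cutoffExp =ᶠ[𝓝 t] fun s : ℝ => cexp (-1 * s) :=
      (eventually_gt_nhds ht').mono fun s hs => by
        simp only [cutoffExp_of_neg_one_le hs.le, neg_one_mul]
    rw [hexp.iteratedDeriv_eq m, iteratedDeriv_cexp_mul_ofReal]
    refine le_max_of_le_right ?_
    simpa [Complex.norm_exp] using show -t ≤ 1 by linarith

theorem moderate_cutoffExp : Moderate w fun _ : ι => cutoffExp :=
  .of_bounded_iteratedDeriv contDiff_cutoffExp exists_norm_iteratedDeriv_cutoffExp_le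

end BoundedExponentials

section NeumannProfile

/-- A smooth function on `ℝ` that equals `cosh (μ x) / (μ sinh μ)` near `[0, 1]`, where it solves
`N'' = μ² N` with `N' 0 = 0` and `N' 1 = 1`. The exponentials are cut off outside `[0, 1]` so that
all derivatives grow at most polynomially in `μ`. -/
noncomputable def neumannProfile (μ x : ℝ) : ℂ :=
  (μ * (1 - Real.exp (-2 * μ)) : ℝ)⁻¹ * (cutoffExp (-μ * x + μ) + cutoffExp (μ * x + μ))

theorem contDiff_neumannProfile (μ : ℝ) : ContDiff ℝ (⊤ : ℕ∞) (neumannProfile μ) :=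
  contDiff_const.mul ((contDiff_cutoffExp.comp (by fun_prop)).add
    (contDiff_cutoffExp.comp (by fun_prop)))

variable {μ : ℝ} (hμ : 0 < μ) {x : ℝ} (hx : x ∈ Set.Icc (0 : ℝ) 1)
include hμ hx

theorem neumannProfile_eventuallyEq : neumannProfile μ =ᶠ[𝓝 x] fun y =>
    (μ * (1 - Real.exp (-2 * μ)) : ℝ)⁻¹ * (cexp (-μ) * (cexp (μ * y) + cexp (-μ * y))) := by
  have hleft : ∀ᶠ y in 𝓝 x, -1 < -μ * y + μ :=
    (show Continuous fun y => -μ * y + μ by fun_prop).continuousAt.eventually_const_lt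
      (by nlinarith [hx.2])
  have hright : ∀ᶠ y in 𝓝 x, -1 < μ * y + μ :=
    (show Continuous fun y => μ * y + μ by fun_prop).continuousAt.eventually_const_lt
      (by nlinarith [hx.1])
  filter_upwards [hleft, hright] with y hy hy'
  rw [neumannProfile, cutoffExp_of_neg_one_le hy.le, cutoffExp_of_neg_one_le hy'.le,
    mul_add (cexp _), ← Complex.exp_add, ← Complex.exp_add]
  push_cast
  ring_nf

theorem deriv_neumannProfile_eventuallyEq : deriv (neumannProfile μ) =ᶠ[𝓝 x] fun y : ℝ =>
    (μ * (1 - Real.exp (-2 * μ)) : ℝ)⁻¹ *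
      (cexp (-μ) * (μ * cexp (μ * y) + -μ * cexp (-μ * y))) := by
  refine (neumannProfile_eventuallyEq hμ hx).deriv.trans (.of_forall fun y => ?_)
  exact ((((hasDerivAt_cexp_mul_ofReal μ y).add (hasDerivAt_cexp_mul_ofReal (-μ) y)).const_mul
    _).const_mul _).deriv

theorem deriv_deriv_neumannProfile :
    deriv (deriv (neumannProfile μ)) x = μ ^ 2 * neumannProfile μ x := by
  rw [(deriv_neumannProfile_eventuallyEq hμ hx).deriv_eq,
    (neumannProfile_eventuallyEq hμ hx).eq_of_nhds]
  have hderiv := ((((hasDerivAt_cexp_mul_ofReal μ x).const_mul (μ : ℂ)).add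
    ((hasDerivAt_cexp_mul_ofReal (-μ) x).const_mul (-μ : ℂ))).const_mul (cexp (-μ))).const_mul
      (((μ * (1 - Real.exp (-2 * μ)) : ℝ)⁻¹ : ℝ) : ℂ)
  refine hderiv.deriv.trans ?_
  ring

omit hx

theorem deriv_neumannProfile_zero : deriv (neumannProfile μ) 0 = 0 := by
  rw [(deriv_neumannProfile_eventuallyEq hμ (by simp)).eq_of_nhds]
  simp

theorem deriv_neumannProfile_one : deriv (neumannProfile μ) 1 = 1 := by
  have hcoeff : ((μ * (1 - Real.exp (-2 * μ)) : ℝ) : ℂ) ≠ 0 := Complex.ofReal_ne_zero.2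
    (mul_pos hμ (sub_pos.2 (Real.exp_lt_one_iff.2 (by linarith)))).ne'
  have hone : cexp (-μ) * cexp μ = 1 := by
    rw [← Complex.exp_add, neg_add_cancel, Complex.exp_zero]
  have hsq : cexp (-μ) * cexp (-μ) = cexp (-2 * μ) := by
    rw [← Complex.exp_add]
    ring_nf
  rw [(deriv_neumannProfile_eventuallyEq hμ (by simp)).eq_of_nhds, Complex.ofReal_inv,
    inv_mul_eq_one₀ hcoeff]
  push_cast
  rw [mul_one, mul_one, ← hsq]
  linear_combination -(μ : ℂ) * hone

end NeumannProfile

/-- For `μ > 0`, the solution `u` of `μ² u - u'' = exp (i η x)` on `[0, 1]` with `u' 0 = u' 1 = 0`: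
the particular solution `exp (i η x) / (μ² + η²)`, with its boundary slopes removed by means of
`neumannProfile` and its reflection. -/
noncomputable def axialMode (μ η x : ℝ) : ℂ :=
  (μ ^ 2 + η ^ 2 : ℝ)⁻¹ * (cexp (I * η * x) + (I * η * neumannProfile μ (1 - x) +
    -(I * η * cexp (I * η)) * neumannProfile μ x))

theorem contDiff_axialMode (μ η : ℝ) : ContDiff ℝ (⊤ : ℕ∞) (axialMode μ η) :=
  contDiff_const.mul ((contDiff_cexp_mul_ofReal (I * η)).add
    ((contDiff_const.mul ((contDiff_neumannProfile μ).comp (contDiff_const.sub contDiff_id))).add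
      (contDiff_const.mul (contDiff_neumannProfile μ))))

theorem deriv_axialMode (μ η : ℝ) : deriv (axialMode μ η) = fun x : ℝ =>
    (μ ^ 2 + η ^ 2 : ℝ)⁻¹ * (I * η * cexp (I * η * x) +
      (I * η * -deriv (neumannProfile μ) (1 - x) +
        -(I * η * cexp (I * η)) * deriv (neumannProfile μ) x)) := by
  have hN : Differentiable ℝ (neumannProfile μ) :=
    (contDiff_neumannProfile μ).differentiable (by simp)
  ext x
  have hreflect := (hN (1 - x)).hasDerivAt.comp_const_sub 1 x
  exact (((hasDerivAt_cexp_mul_ofReal (I * η) x).add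
    ((hreflect.const_mul _).add ((hN x).hasDerivAt.const_mul _))).const_mul _).deriv

theorem deriv_deriv_axialMode {μ : ℝ} (hμ : 0 < μ) (η : ℝ) {x : ℝ} (hx : x ∈ Set.Icc (0 : ℝ) 1) :
    deriv (deriv (axialMode μ η)) x = μ ^ 2 * axialMode μ η x - cexp (I * η * x) := by
  have hN' : Differentiable ℝ (deriv (neumannProfile μ)) :=
    ((contDiff_infty_iff_deriv.1 (contDiff_neumannProfile μ)).2).differentiable (by simp)
  have hx' : 1 - x ∈ Set.Icc (0 : ℝ) 1 := ⟨by linarith [hx.2], by linarith [hx.1]⟩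
  have hderiv := ((((hasDerivAt_cexp_mul_ofReal (I * η) x).const_mul (I * η)).add
    ((((hN' (1 - x)).hasDerivAt.comp_const_sub 1 x).neg.const_mul (I * η)).add
      ((hN' x).hasDerivAt.const_mul (-(I * η * cexp (I * η)))))).const_mul
        (((μ ^ 2 + η ^ 2 : ℝ)⁻¹ : ℝ) : ℂ)).deriv
  have hcoeff : (((μ ^ 2 + η ^ 2 : ℝ)⁻¹ : ℝ) : ℂ) * (μ ^ 2 + η ^ 2) = 1 := by
    rw [← Complex.ofReal_pow, ← Complex.ofReal_pow, ← Complex.ofReal_add, ← Complex.ofReal_mul,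
      inv_mul_cancel₀ (by positivity), Complex.ofReal_one]
  rw [deriv_axialMode]
  refine hderiv.trans ?_
  rw [deriv_deriv_neumannProfile hμ hx, deriv_deriv_neumannProfile hμ hx', axialMode]
  linear_combination (-cexp (I * η * x)) * hcoeff +
    (((μ ^ 2 + η ^ 2 : ℝ)⁻¹ : ℝ) : ℂ) * η ^ 2 * cexp (I * η * x) * Complex.I_sq

theorem deriv_axialMode_eq_zero {μ : ℝ} (hμ : 0 < μ) (η : ℝ) {x : ℝ} (hx : x = 0 ∨ x = 1) :
    deriv (axialMode μ η) x = 0 := by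
  rcases hx with rfl | rfl <;>
    simp [deriv_axialMode, deriv_neumannProfile_zero hμ, deriv_neumannProfile_one hμ]

theorem sqrt_add_dotProduct_self_pos {d : Type*} [Fintype d] {κ : ℝ} (hκ : 0 < κ) (ν : d → ℝ) :
    0 < √(κ + ν ⬝ᵥ ν) :=
  Real.sqrt_pos.2 (add_pos_of_pos_of_nonneg hκ
    (Finset.sum_nonneg fun j _ => mul_self_nonneg (ν j)))

section NeumannMode

variable {d : Type*} [Fintype d] [DecidableEq d] {u : ℝ → ℂ} {ν : d → ℝ} {i : d}

theorem partialDeriv_mul_planeWave (hu : Differentiable ℝ u) (j : d) (p : d → ℝ) :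
    partialDeriv j (fun q => u (q i) * planeWave ν q) p =
      ((if j = i then deriv u (p i) else 0) + I * ν j * u (p i)) * planeWave ν p := by
  have hcoord : HasFDerivAt (fun q : d → ℝ => u (q i)) _ p :=
    (hu (p i)).hasDerivAt.hasFDerivAt.comp p (hasFDerivAt_apply (𝕜 := ℝ) i p)
  have hwave : HasFDerivAt (planeWave ν) (fderiv ℝ (planeWave ν) p) p :=
    ((contDiff_planeWave ν).differentiable (by simp) p).hasFDerivAt
  have hν : fderiv ℝ (planeWave ν) p (Pi.single j 1) = I * ν j * planeWave ν p :=
    partialDeriv_planeWave j ν p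
  rw [partialDeriv, (hcoord.fun_mul hwave).fderiv]
  simp only [add_apply, smul_apply, smul_eq_mul, hν, ContinuousLinearMap.comp_apply,
    ContinuousLinearMap.proj_apply, Pi.single_apply, eq_comm (a := i),
    ContinuousLinearMap.toSpanSingleton_apply, ite_smul, one_smul, zero_smul, mul_ite, mul_zero]
  split_ifs <;> ring

theorem partialDeriv_partialDeriv_mul_planeWave (hu : ContDiff ℝ (⊤ : ℕ∞) u) (hν : ν i = 0) (j : d)
    (p : d → ℝ) : partialDeriv j (partialDeriv j fun q => u (q i) * planeWave ν q) p =
      ((if j = i then deriv (deriv u) (p i) else 0) - ν j ^ 2 * u (p i)) * planeWave ν p := by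
  have hu₁ : Differentiable ℝ u := hu.differentiable (by simp)
  have hu₂ : Differentiable ℝ (deriv u) :=
    (contDiff_infty_iff_deriv.1 hu).2.differentiable (by simp)
  rw [funext (partialDeriv_mul_planeWave hu₁ j)]
  rcases eq_or_ne j i with rfl | hj
  · simp [hν, partialDeriv_mul_planeWave hu₂]
  · simp only [hj, if_false, zero_add, zero_sub]
    rw [partialDeriv_mul_planeWave (u := fun x => I * ν j * u x) (hu₁.const_mul _), if_neg hj]
    linear_combination ν j ^ 2 * u (p i) * planeWave ν p * Complex.I_sq

theorem planeWave_eq_mul_update (ω : d → ℝ) (i : d) (p : d → ℝ) :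
    planeWave ω p = cexp (I * ω i * p i) * planeWave (Function.update ω i 0) p := by
  have hdot : ω ⬝ᵥ p = ω i * p i + Function.update ω i 0 ⬝ᵥ p := by
    simp only [dotProduct, ← Finset.add_sum_erase _ _ (Finset.mem_univ i), Function.update_self,
      zero_mul, zero_add]
    congr 1
    exact Finset.sum_congr rfl fun j hj => by rw [Function.update_of_ne (Finset.ne_of_mem_erase hj)]
  rw [planeWave, planeWave, hdot, ← Complex.exp_add]
  push_cast
  ring_nf

/-- The solution `h` of the Neumann problem `κ h - Δ h = exp (i ω·p)` on the slab `0 ≤ p i ≤ 1`,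
`∂ᵢ h = 0` on its faces, obtained by separating the coordinate `i` from the others. -/
noncomputable def neumannMode (κ : ℝ) (i : d) (ω p : d → ℝ) : ℂ :=
  axialMode √(κ + Function.update ω i 0 ⬝ᵥ Function.update ω i 0) (ω i) (p i) *
    planeWave (Function.update ω i 0) p

theorem partialDeriv_neumannMode_eq_zero {κ : ℝ} (hκ : 0 < κ) (ω : d → ℝ) {p : d → ℝ}
    (hp : p i = 0 ∨ p i = 1) : partialDeriv i (neumannMode κ i ω) p = 0 := by
  have haxial := (contDiff_axialMode √(κ + Function.update ω i 0 ⬝ᵥ Function.update ω i 0)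
    (ω i)).differentiable (by simp)
  refine (partialDeriv_mul_planeWave haxial i p).trans ?_
  simp [deriv_axialMode_eq_zero (sqrt_add_dotProduct_self_pos hκ _) _ hp]

theorem helmholtz_neumannMode {κ : ℝ} (hκ : 0 < κ) (ω : d → ℝ) {p : d → ℝ}
    (hp : p i ∈ Set.Icc (0 : ℝ) 1) :
    κ * neumannMode κ i ω p - ∑ j, partialDeriv j (partialDeriv j (neumannMode κ i ω)) p =
      planeWave ω p := by
  set ν := Function.update ω i 0
  set μ := √(κ + ν ⬝ᵥ ν) with hμ
  have hμpos : 0 < μ := sqrt_add_dotProduct_self_pos hκ ν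
  have hμsq : (μ : ℂ) ^ 2 = κ + ∑ j, (ν j : ℂ) ^ 2 := by
    rw [← Complex.ofReal_pow, hμ, Real.sq_sqrt (Real.sqrt_pos.1 hμpos).le]
    simp [dotProduct, sq]
  have hsecond : ∀ j, partialDeriv j (partialDeriv j (neumannMode κ i ω)) p =
      ((if j = i then deriv (deriv (axialMode μ (ω i))) (p i) else 0) -
        ν j ^ 2 * axialMode μ (ω i) (p i)) * planeWave ν p := fun j =>
    partialDeriv_partialDeriv_mul_planeWave (contDiff_axialMode _ _) (by simp) j p
  simp only [hsecond, ← Finset.sum_mul, Finset.sum_sub_distrib, Finset.sum_ite_eq', Finset.mem_univ,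
    if_true]
  rw [deriv_deriv_axialMode hμpos _ hp, planeWave_eq_mul_update ω i p, neumannMode]
  linear_combination (-axialMode μ (ω i) (p i) * planeWave ν p) * hμsq

end NeumannMode

section ModerateModes

variable {ι : Type*} {w : ι → ℝ}

theorem moderate_planeWave {d : Type*} [Fintype d] (hw : ∀ k, 1 ≤ w k) {ω : ι → d → ℝ}
    (hω : ∀ j, PolyBounded w fun k => ω k j) : Moderate w fun k => planeWave (ω k) := by
  let phase : ι → (d → ℝ) →L[ℝ] ℝ := fun k => ∑ j, ω k j • ContinuousLinearMap.proj j
  have hphase : PolyBounded w phase := .sum hw _ fun j _ => (hω j).smul_const _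
  refine (moderate_cexp_I_mul.comp_affine hphase 0).congr fun k p => ?_
  simp [planeWave, phase, dotProduct, mul_comm I]

theorem moderate_neumannProfile (hw : ∀ k, 1 ≤ w k) {μ : ι → ℝ} (hμ : PolyBounded w μ) {m : ℝ}
    (hm : 0 < m) (hmμ : ∀ k, m ≤ μ k) : Moderate w fun k => neumannProfile (μ k) := by
  have hcoeff : PolyBounded w fun k => (((μ k * (1 - Real.exp (-2 * μ k)))⁻¹ : ℝ) : ℂ) :=
    .of_bound (m * (1 - Real.exp (-2 * m)))⁻¹ fun k => by
      have hlower : 0 < m * (1 - Real.exp (-2 * m)) :=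
        mul_pos hm (sub_pos.2 (Real.exp_lt_one_iff.2 (by linarith)))
      have hmono : m * (1 - Real.exp (-2 * m)) ≤ μ k * (1 - Real.exp (-2 * μ k)) :=
        mul_le_mul (hmμ k) (sub_le_sub_left (Real.exp_le_exp.2 (by linarith [hmμ k])) 1)
          (pos_of_mul_pos_right hlower hm.le).le (hm.le.trans (hmμ k))
      rw [Complex.norm_real, Real.norm_of_nonneg (inv_nonneg.2 (hlower.le.trans hmono))]
      gcongr
  exact .const_mul hw hcoeff (.add hw
    (moderate_cutoffExp.comp_mul_add (hμ.mono fun k => (norm_neg (μ k)).le) μ)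
    (moderate_cutoffExp.comp_mul_add hμ μ))

theorem moderate_axialMode (hw : ∀ k, 1 ≤ w k) {μ η : ι → ℝ} (hμ : PolyBounded w μ) {m : ℝ}
    (hm : 0 < m) (hmμ : ∀ k, m ≤ μ k) (hη : PolyBounded w η) :
    Moderate w fun k => axialMode (μ k) (η k) := by
  have hcoeff : PolyBounded w fun k => (((μ k ^ 2 + η k ^ 2)⁻¹ : ℝ) : ℂ) :=
    .of_bound (m ^ 2)⁻¹ fun k => by
      have hlower : m ^ 2 ≤ μ k ^ 2 + η k ^ 2 := by nlinarith [hmμ k, sq_nonneg (η k)]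
      rw [Complex.norm_real, Real.norm_of_nonneg (by positivity)]
      gcongr
  have hwave : Moderate w fun k (x : ℝ) => cexp (I * η k * x) :=
    (moderate_cexp_I_mul.comp_mul_add hη 0).congr fun k x => by simp [mul_assoc]
  have hN := moderate_neumannProfile hw hμ hm hmμ
  have hN' : Moderate w fun k x => neumannProfile (μ k) (1 - x) :=
    (hN.comp_mul_add (.of_bound (1 : ℝ) (f := fun _ => (-1 : ℝ)) (by simp)) 1).congr fun k x => by
      simp [sub_eq_neg_add]
  exact .const_mul hw hcoeff (.add hw hwave (.add hw
    (.const_mul hw (hη.mono fun k => by simp) hN')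
    (.const_mul hw (hη.mono fun k => by simp [Complex.norm_exp]) hN)))

theorem moderate_neumannMode {d : Type*} [Fintype d] [DecidableEq d] (hw : ∀ k, 1 ≤ w k) {κ : ℝ}
    (hκ : 0 < κ) (i : d) {ω : ι → d → ℝ} (hω : ∀ j, PolyBounded w fun k => ω k j) :
    Moderate w fun k => neumannMode κ i (ω k) := by
  set ν : ι → d → ℝ := fun k => Function.update (ω k) i 0
  have hν : ∀ j, PolyBounded w fun k => ν k j := fun j => (hω j).mono fun k => by
    rcases eq_or_ne j i with rfl | hj <;> simp [ν, *]
  have hνsq : PolyBounded w fun k => ν k ⬝ᵥ ν k := .sum hw _ fun j _ => (hν j).mul (hν j)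
  have hμ : PolyBounded w fun k => √(κ + ν k ⬝ᵥ ν k) := by
    have hmajorant : PolyBounded w fun k => (1 + κ) + ν k ⬝ᵥ ν k :=
      .add hw (.of_bound ‖1 + κ‖ fun _ => le_rfl) hνsq
    refine hmajorant.mono fun k => ?_
    have hpos := Real.sqrt_pos.1 (sqrt_add_dotProduct_self_pos hκ (ν k))
    rw [Real.norm_of_nonneg (Real.sqrt_nonneg _), Real.norm_of_nonneg (by linarith)]
    exact Real.sqrt_le_iff.2 ⟨by linarith, by nlinarith⟩
  have haxial := moderate_axialMode hw hμ (Real.sqrt_pos.2 hκ)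
    (fun k => Real.sqrt_le_sqrt (le_add_of_nonneg_right
      (Finset.sum_nonneg fun j _ => mul_self_nonneg (ν k j)))) (hω i)
  have hcoord := haxial.comp_affine
    (L := fun _ : ι => (ContinuousLinearMap.proj i : (d → ℝ) →L[ℝ] ℝ))
    (.of_bound _ fun _ => le_rfl) 0
  exact ((hcoord.mul hw (moderate_planeWave hw hν))).congr fun k p => by simp [neumannMode, ν]

end ModerateModes

/-! ### The Neumann problem for a general right-hand side -/

theorem exists_periodic_eq_self_on_Icc : ∃ θ : ℝ → ℝ, ContDiff ℝ (⊤ : ℕ∞) θ ∧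
    Function.Periodic θ (2 * π) ∧ ∀ x ∈ Set.Icc (0 : ℝ) 1, θ x = x := by
  -- `D` is the identity on `[1/2, 1]` but has no zeros, which makes `arctan (sin x / D (cos x))` a
  -- smooth periodic substitute for `arctan (tan x)`.
  let D : ℝ → ℝ := fun c => 1 + (c - 1) * Real.smoothTransition (2 * c)
  have hD : ContDiff ℝ (⊤ : ℕ∞) D := contDiff_const.add ((contDiff_id.sub contDiff_const).mul
    (Real.smoothTransition.contDiff.comp (contDiff_const.mul contDiff_id)))
  have hDpos : ∀ c, D c ≠ 0 := fun c => by
    refine ne_of_gt ?_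
    rcases le_or_gt c 0 with hc | hc
    · simp [D, Real.smoothTransition.zero_of_nonpos (show 2 * c ≤ 0 by linarith)]
    · have hpos := Real.smoothTransition.pos_of_pos (show 0 < 2 * c by linarith)
      have hle := Real.smoothTransition.le_one (2 * c)
      change 0 < 1 + (c - 1) * Real.smoothTransition (2 * c)
      nlinarith [mul_pos hc hpos]
  have hDhalf : ∀ c, 1 / 2 ≤ c → D c = c := fun c hc => by
    simp [D, Real.smoothTransition.one_of_one_le (show 1 ≤ 2 * c by linarith)]
  refine ⟨fun x => Real.arctan (Real.sin x / D (Real.cos x)),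
    Real.contDiff_arctan.comp (Real.contDiff_sin.div (hD.comp Real.contDiff_cos) fun x => hDpos _),
    fun x => by simp only [Real.sin_add_two_pi, Real.cos_add_two_pi], fun x hx => ?_⟩
  have hcos : 1 / 2 ≤ Real.cos x := by
    nlinarith [Real.one_sub_sq_div_two_le_cos (x := x), hx.1, hx.2]
  change Real.arctan (Real.sin x / D (Real.cos x)) = x
  rw [hDhalf _ hcos, ← Real.tan_eq_sin_div_cos]
  exact Real.arctan_tan (by linarith [hx.1, Real.pi_pos]) (by linarith [hx.2, Real.pi_gt_three])

/-- The wave vectors used to expand functions on the slab `0 ≤ p i ≤ 1`: period `1` in the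
coordinates other than `i`, and period `2π` in the coordinate `i`. -/
noncomputable def slabFrequency {d : Type*} [DecidableEq d] (i : d) (k : d → ℤ) (j : d) : ℝ :=
  if j = i then k j else 2 * π * k j

theorem planeWave_slabFrequency {d : Type*} [Fintype d] [DecidableEq d] (i : d) (k : d → ℤ)
    (p : d → ℝ) : planeWave (slabFrequency i k) p =
      planeWave (fun j => 2 * π * k j) (Function.update p i (p i / (2 * π))) := by
  have hdot : slabFrequency i k ⬝ᵥ p =
      (fun j => 2 * π * k j) ⬝ᵥ Function.update p i (p i / (2 * π)) :=
    Finset.sum_congr rfl fun j _ => by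
      rcases eq_or_ne j i with rfl | hj
      · simp only [slabFrequency, if_true, Function.update_self]
        field_simp
      · simp only [slabFrequency, if_neg hj, Function.update_of_ne hj]
  rw [planeWave, planeWave, hdot]

theorem update_slabFrequency {d : Type*} [DecidableEq d] (i : d) (k : d → ℤ) :
    Function.update (slabFrequency i k) i 0 = fun j => 2 * π * (Function.update k i 0 j : ℤ) := by
  ext j
  rcases eq_or_ne j i with rfl | hj <;> simp [slabFrequency, *]

theorem polyBounded_slabFrequency {d : Type*} [Fintype d] [DecidableEq d] (i j : d) :
    PolyBounded (fun k : d → ℤ => 1 + ‖k‖) fun k => slabFrequency i k j := by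
  have hcoord : PolyBounded (fun k : d → ℤ => 1 + ‖k‖) fun k => (k j : ℝ) :=
    (PolyBounded.self _).mono fun k => by
      rw [Real.norm_of_nonneg (show 0 ≤ 1 + ‖k‖ by positivity)]
      exact (norm_le_pi_norm k j).trans (le_add_of_nonneg_left zero_le_one)
  by_cases hj : j = i
  · simpa only [slabFrequency, if_pos hj] using hcoord
  · simpa only [slabFrequency, if_neg hj] using
      (PolyBounded.of_bound ‖2 * π‖ fun _ => le_rfl).mul hcoord

theorem exists_periodic_reparametrization {d V : Type*} [Fintype d] [DecidableEq d]
    [NormedAddCommGroup V] [NormedSpace ℝ V] {i : d} {R : (d → ℝ) → V}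
    (hR : ContDiff ℝ (⊤ : ℕ∞) R) (hper : ∀ j ≠ i, Function.Periodic R (Pi.single j 1)) :
    ∃ g : (d → ℝ) → V, ContDiff ℝ (⊤ : ℕ∞) g ∧ (∀ j, Function.Periodic g (Pi.single j 1)) ∧
      ∀ p, p i ∈ Set.Icc (0 : ℝ) 1 → g (Function.update p i (p i / (2 * π))) = R p := by
  obtain ⟨θ, hθ, hθper, hθself⟩ := exists_periodic_eq_self_on_Icc
  refine ⟨fun p => R (Function.update p i (θ (2 * π * p i))), hR.comp (contDiff_pi.2 fun j => ?_),
    fun j p => ?_, fun p hp => ?_⟩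
  · rcases eq_or_ne j i with rfl | hj
    · simpa using! hθ.comp (contDiff_const.mul (contDiff_apply ℝ ℝ j))
    · simpa [hj] using contDiff_apply ℝ ℝ j
  · rcases eq_or_ne j i with rfl | hj
    · have hθp : θ (2 * π * (p j + 1)) = θ (2 * π * p j) := by rw [mul_add, mul_one, hθper]
      simp only [Pi.add_apply, Pi.single_eq_same, hθp]
      congr 1
      ext l
      rcases eq_or_ne l j with rfl | hl <;> simp [*]
    · have hshift : Function.update (p + Pi.single j 1) i (θ (2 * π * p i)) =
          Function.update p i (θ (2 * π * p i)) + Pi.single j 1 := by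
        ext l
        rcases eq_or_ne l i with rfl | hl <;> simp [*]
      simpa [Pi.single_eq_of_ne' hj, hshift] using hper j hj _
  · simp [mul_div_cancel₀, Real.pi_ne_zero, hθself _ hp]

theorem exists_slab_expansion {n : ℕ} {i : Fin (n + 1)} {R : (Fin (n + 1) → ℝ) → ℂ}
    (hR : ContDiff ℝ (⊤ : ℕ∞) R) (hper : ∀ j ≠ i, Function.Periodic R (Pi.single j 1)) :
    ∃ c : (Fin (n + 1) → ℤ) → ℂ, RapidDecay (fun k => 1 + ‖k‖) c ∧
      ∀ p : Fin (n + 1) → ℝ, p i ∈ Set.Icc (0 : ℝ) 1 →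
        HasSum (fun k => c k * planeWave (slabFrequency i k) p) (R p) := by
  obtain ⟨g, hg, hgper, hgR⟩ := exists_periodic_reparametrization hR hper
  have hdecay := rapidDecay_cubeFourierCoeff hg hgper
  have hsum : Summable (cubeFourierCoeff g) := by
    simpa using (hasSum_superposition (fun k => le_add_of_nonneg_right (norm_nonneg k))
      (summable_one_add_norm_pow_inv _) hdecay
      (Moderate.const (E := ℝ) (.of_bound ‖(1 : ℂ)‖ fun _ => le_rfl)) 0).summable
  refine ⟨cubeFourierCoeff g, hdecay, fun p hp => ?_⟩
  simpa only [hgR p hp, planeWave_slabFrequency] using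
    hasSum_cubeFourierCoeff hg.continuous hgper hsum (Function.update p i (p i / (2 * π)))

section NeumannProblem

theorem partialDeriv_superposition {ι d : Type*} [Fintype d] [DecidableEq d] {w : ι → ℝ}
    (hw : ∀ k, 1 ≤ w k) {s : ℕ} (hs : Summable fun k => (w k ^ s)⁻¹) {c : ι → ℂ}
    (hc : RapidDecay w c) {b : ι → (d → ℝ) → ℂ} (hb : Moderate w b) (j : d) :
    partialDeriv j (superposition c b) = superposition c fun k => partialDeriv j (b k) :=
  funext fun p => fderiv_superposition_apply hw hs hc hb p (Pi.single j 1)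

theorem partialDeriv_re {d : Type*} [Finite d] [DecidableEq d] {f : (d → ℝ) → ℂ}
    (hf : Differentiable ℝ f) (j : d) :
    partialDeriv j (fun p => (f p).re) = fun p => (partialDeriv j f p).re := by
  cases nonempty_fintype d
  exact funext fun p => congrArg (· (Pi.single j 1))
    (Complex.reCLM.hasFDerivAt.comp p (hf p).hasFDerivAt).fderiv

theorem periodic_neumannMode {d : Type*} [Fintype d] [DecidableEq d] (κ : ℝ) {i j : d} (hj : j ≠ i)
    (k : d → ℤ) : Function.Periodic (neumannMode κ i (slabFrequency i k)) (Pi.single j 1) :=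
  fun p => by
    rw [neumannMode, neumannMode, update_slabFrequency, planeWave_periodic _ j p, Pi.add_apply,
      Pi.single_eq_of_ne' hj, add_zero]

variable {n : ℕ} {i : Fin (n + 1)} {κ : ℝ} (hκ : 0 < κ)
include hκ

theorem exists_complex_neumann_solution {R : (Fin (n + 1) → ℝ) → ℂ}
    (hR : ContDiff ℝ (⊤ : ℕ∞) R) (hper : ∀ j ≠ i, Function.Periodic R (Pi.single j 1)) :
    ∃ H : (Fin (n + 1) → ℝ) → ℂ, ContDiff ℝ (⊤ : ℕ∞) H ∧
      (∀ j ≠ i, Function.Periodic H (Pi.single j 1)) ∧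
      (∀ p : Fin (n + 1) → ℝ, p i = 0 ∨ p i = 1 → partialDeriv i H p = 0) ∧
      ∀ p : Fin (n + 1) → ℝ, p i ∈ Set.Icc (0 : ℝ) 1 →
        κ * H p - ∑ j, partialDeriv j (partialDeriv j H) p = R p := by
  obtain ⟨c, hc, hexpand⟩ := exists_slab_expansion hR hper
  have hw : ∀ k : Fin (n + 1) → ℤ, 1 ≤ 1 + ‖k‖ := fun k => le_add_of_nonneg_right (norm_nonneg k)
  have hs := summable_one_add_norm_pow_inv (Fin (n + 1))
  let mode : (Fin (n + 1) → ℤ) → (Fin (n + 1) → ℝ) → ℂ := fun k =>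
    neumannMode κ i (slabFrequency i k)
  have hmode : Moderate (fun k => 1 + ‖k‖) mode :=
    moderate_neumannMode hw hκ i (polyBounded_slabFrequency i)
  have hmode₁ : ∀ j, Moderate (fun k => 1 + ‖k‖) fun k => partialDeriv j (mode k) := fun j =>
    hmode.fderiv_apply _
  have hmode₂ : ∀ j, Moderate (fun k => 1 + ‖k‖) fun k =>
      partialDeriv j (partialDeriv j (mode k)) := fun j => (hmode₁ j).fderiv_apply _
  refine ⟨superposition c mode, contDiff_superposition hw hs hc hmode, fun j hj p => ?_,
    fun p hp => ?_, fun p hp => ?_⟩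
  · exact tsum_congr fun k => congrArg (c k * ·) (periodic_neumannMode κ hj k p)
  · rw [partialDeriv_superposition hw hs hc hmode]
    simp [superposition, mode, partialDeriv_neumannMode_eq_zero hκ _ hp]
  · simp only [partialDeriv_superposition hw hs hc hmode,
      partialDeriv_superposition hw hs hc (hmode₁ _)]
    have hterms := ((hasSum_superposition hw hs hc hmode p).mul_left (κ : ℂ)).sub
      (hasSum_sum (s := Finset.univ) fun j _ => hasSum_superposition hw hs hc (hmode₂ j) p)
    refine hterms.unique ((hexpand p hp).congr_fun fun k => ?_)
    rw [← helmholtz_neumannMode hκ _ hp, mul_sub, Finset.mul_sum, mul_left_comm]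

theorem exists_neumann_solution {R : (Fin (n + 1) → ℝ) → ℝ} (hR : ContDiff ℝ (⊤ : ℕ∞) R)
    (hper : ∀ j ≠ i, Function.Periodic R (Pi.single j 1)) :
    ∃ H : (Fin (n + 1) → ℝ) → ℝ, ContDiff ℝ (⊤ : ℕ∞) H ∧
      (∀ j ≠ i, Function.Periodic H (Pi.single j 1)) ∧
      (∀ p : Fin (n + 1) → ℝ, p i = 0 ∨ p i = 1 → partialDeriv i H p = 0) ∧
      ∀ p : Fin (n + 1) → ℝ, p i ∈ Set.Icc (0 : ℝ) 1 →
        κ * H p - ∑ j, partialDeriv j (partialDeriv j H) p = R p := by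
  obtain ⟨H, hH, hHper, hHface, hHeq⟩ := exists_complex_neumann_solution (i := i) hκ
    (Complex.ofRealCLM.contDiff.comp hR) fun j hj => (hper j hj).comp _
  have hre := partialDeriv_re (hH.differentiable (by simp))
  have hre₂ : ∀ j, partialDeriv j (partialDeriv j fun p => (H p).re) = _ := fun j =>
    (congrArg (partialDeriv j) (hre j)).trans
      (partialDeriv_re ((contDiff_partialDeriv hH j).differentiable (by simp)) j)
  refine ⟨fun p => (H p).re, Complex.reCLM.contDiff.comp hH, fun j hj => (hHper j hj).comp _,
    fun p hp => ?_, fun p hp => ?_⟩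
  · simp [hre, hHface p hp]
  · simpa [hre₂] using congrArg Complex.re (hHeq p hp)

end NeumannProblem

theorem perYZ_iff {f : (Fin 3 → ℝ) → ℝ} :
    PerYZ f ↔ ∀ j ≠ 0, Function.Periodic f (Pi.single j 1) := by
  simp [PerYZ, Function.Periodic, Fin.forall_fin_succ, forall_and]

theorem stmt9_general {n : ℕ} (i : Fin (n + 1)) {lam : ℝ} (hlam : lam ≠ 0)
    {F : (Fin (n + 1) → ℝ) → ℝ} {G : Fin (n + 1) → (Fin (n + 1) → ℝ) → ℝ}
    (hFs : ContDiff ℝ (⊤ : ℕ∞) F) (hGs : ∀ j, ContDiff ℝ (⊤ : ℕ∞) (G j))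
    (hFp : ∀ j ≠ i, Function.Periodic F (Pi.single j 1))
    (hGp : ∀ l, ∀ j ≠ i, Function.Periodic (G l) (Pi.single j 1))
    (hGbc : ∀ p : Fin (n + 1) → ℝ, p i = 0 ∨ p i = 1 → G i p = 0) :
    ∃ (H : (Fin (n + 1) → ℝ) → ℝ) (M : Fin (n + 1) → (Fin (n + 1) → ℝ) → ℝ),
      ContDiff ℝ (⊤ : ℕ∞) H ∧ (∀ j, ContDiff ℝ (⊤ : ℕ∞) (M j)) ∧
      (∀ j ≠ i, Function.Periodic H (Pi.single j 1)) ∧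
      (∀ l, ∀ j ≠ i, Function.Periodic (M l) (Pi.single j 1)) ∧
      (∀ p : Fin (n + 1) → ℝ, p i = 0 ∨ p i = 1 → partialDeriv i H p = 0 ∧ M i p = 0) ∧
      (∀ p : Fin (n + 1) → ℝ, p i ∈ Set.Icc (0 : ℝ) 1 →
        lam * H p - ∑ j, partialDeriv j (M j) p = F p ∧
        ∀ j, lam * M j p - partialDeriv j H p = G j p) := by
  have hdivG : ContDiff ℝ (⊤ : ℕ∞) fun p => ∑ j, partialDeriv j (G j) p :=
    ContDiff.sum fun j _ => contDiff_partialDeriv (hGs j) j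
  obtain ⟨H, hH, hHper, hHface, hHeq⟩ := exists_neumann_solution (i := i) (sq_pos_of_ne_zero hlam)
    (R := fun p => lam * F p + ∑ j, partialDeriv j (G j) p)
    ((contDiff_const.mul hFs).add hdivG) fun j hj p => by
      simp only [hFp j hj p, periodic_partialDeriv (hGp _ j hj) _ p]
  have hdiv : ∀ j p, partialDeriv j (fun q => lam⁻¹ * (G j q + partialDeriv j H q)) p =
      lam⁻¹ * (partialDeriv j (G j) p + partialDeriv j (partialDeriv j H) p) := fun j p => by
    have hGj := ((hGs j).differentiable (by simp) p).hasFDerivAt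
    have hHj := ((contDiff_partialDeriv hH j).differentiable (by simp) p).hasFDerivAt
    exact congrArg (· (Pi.single j 1)) ((hGj.add hHj).const_mul lam⁻¹).fderiv
  refine ⟨H, fun j p => lam⁻¹ * (G j p + partialDeriv j H p), hH,
    fun j => contDiff_const.mul ((hGs j).add (contDiff_partialDeriv hH j)), hHper,
    fun l j hj p => ?_, fun p hp => ⟨hHface p hp, ?_⟩, fun p hp => ⟨?_, fun j => ?_⟩⟩
  · simp only [hGp l j hj p, periodic_partialDeriv (hHper j hj) l p]
  · simp [hGbc p hp, hHface p hp]
  · have heq := hHeq p hp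
    simp only [hdiv, ← Finset.mul_sum, Finset.sum_add_distrib]
    field_simp
    linear_combination heq
  · field_simp
    ring

/-- Surjectivity of `λ - Â` for the constraint propagation operator
`Â(H,M) = (div M, grad H)` on smooth fields satisfying the boundary conditions
`∂₁H = 0`, `M₁ = 0` on the faces `x ∈ {0,1}`. -/
theorem stmt9 (lam : ℝ) (hlam : 0 < lam)
    (F : (Fin 3 → ℝ) → ℝ) (G : Fin 3 → (Fin 3 → ℝ) → ℝ)
    (hFs : ContDiff ℝ (⊤ : ℕ∞) F) (hGs : ∀ i, ContDiff ℝ (⊤ : ℕ∞) (G i))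
    (hFp : PerYZ F) (hGp : ∀ i, PerYZ (G i))
    (hGbc : ∀ p : Fin 3 → ℝ, p 0 = 0 ∨ p 0 = 1 → G 0 p = 0) :
    ∃ (H : (Fin 3 → ℝ) → ℝ) (M : Fin 3 → (Fin 3 → ℝ) → ℝ),
      ContDiff ℝ (⊤ : ℕ∞) H ∧ (∀ i, ContDiff ℝ (⊤ : ℕ∞) (M i)) ∧ PerYZ H ∧ (∀ i, PerYZ (M i)) ∧
      (∀ p : Fin 3 → ℝ, p 0 = 0 ∨ p 0 = 1 → pd 0 H p = 0 ∧ M 0 p = 0) ∧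
      (∀ p : Fin 3 → ℝ, p 0 ∈ Set.Icc (0 : ℝ) 1 →
        lam * H p - ∑ i, pd i (M i) p = F p ∧
        ∀ i, lam * M i p - pd i H p = G i p) := by
  simp only [perYZ_iff] at hFp hGp ⊢
  exact stmt9_general 0 hlam.ne' hFs hGs hFp hGp hGbc
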